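/- Let X be a bounded geometry metric space that does not admit a coarse embedding into the real Hilbert space ℓ²(ℕ). Then there exist ε > 0 and R > 0 such that for all S > 0 there exists a probability measure μ on X such that every subset E ⊆ supp(μ) with diam(E) ≤ S satisfies μ(∂_R E) ≥ ε · μ(E). -/

import Mathlib

/-- `N_R(E)`, the `R`-neighbourhood of `E`. -/
def nbhd {X : Type*} [MetricSpace X] (R : ℝ) (E : Set X) : Set X :=
  {y | ∃ e ∈ E, dist y e ≤ R}

/-- `∂_R E = N_R(E) \ E`. -/
def bdry {X : Type*} [MetricSpace X] (R : ℝ) (E : Set X) : Set X :=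
  nbhd R E \ E

/-- Bounded geometry. -/
def BoundedGeometry (X : Type*) [MetricSpace X] : Prop :=
  ∀ R : ℝ, 0 < R → ∃ N : ℕ, ∀ x : X,
    {y | dist x y ≤ R}.Finite ∧ {y | dist x y ≤ R}.ncard ≤ N

/-- A probability measure on `X`, as a function. -/
def IsProbFn {X : Type*} (μ : X → ℝ) : Prop :=
  (∀ x, 0 ≤ μ x) ∧ Summable μ ∧ ∑' x, μ x = 1

/-- `μ(E)`. -/
noncomputable def measOf {X : Type*} (μ : X → ℝ) (E : Set X) : ℝ := ∑' x : E, μ x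

/-- Uniform local amenability. -/
def ULA (X : Type*) [MetricSpace X] : Prop :=
  ∀ R : ℝ, 0 < R → ∀ ε : ℝ, 0 < ε → ∃ S : ℝ, 0 < S ∧
    ∀ F : Set X, F.Finite → ∃ E : Set X, E.Finite ∧
      EMetric.diam E ≤ ENNReal.ofReal S ∧
      ((bdry R E ∩ F).ncard : ℝ) < ε * ((E ∩ F).ncard : ℝ)

/-- Measured uniform local amenability. -/
def ULAmu (X : Type*) [MetricSpace X] : Prop :=
  ∀ R : ℝ, 0 < R → ∀ ε : ℝ, 0 < ε → ∃ S : ℝ, 0 < S ∧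
    ∀ μ : X → ℝ, IsProbFn μ → ∃ E : Set X, E.Finite ∧
      EMetric.diam E ≤ ENNReal.ofReal S ∧
      measOf μ (bdry R E) < ε * measOf μ E

/-- Coarse embedding. -/
def CoarseEmbedding {X Y : Type*} [MetricSpace X] [MetricSpace Y] (f : X → Y) : Prop :=
  ∃ ρm ρp : ℝ → ℝ, Monotone ρm ∧ Monotone ρp ∧
    Filter.Tendsto ρm Filter.atTop Filter.atTop ∧
    ∀ x₁ x₂ : X, ρm (dist x₁ x₂) ≤ dist (f x₁) (f x₂) ∧
      dist (f x₁) (f x₂) ≤ ρp (dist x₁ x₂)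


section HilbertPart

/-- Extension of the countable orthonormal coordinates to `ℓ²(ℕ)`. -/
theorem exists_l2_isometry {H : Type*} [NormedAddCommGroup H] [InnerProductSpace ℝ H]
    [CompleteSpace H] [TopologicalSpace.SeparableSpace H] :
    ∃ g : H → lp (fun _ : ℕ => ℝ) 2, Isometry g := by
  obtain ⟨w, b, hb⟩ := exists_hilbertBasis ℝ H
  have hcount : Countable w := by
    have hon : Orthonormal ℝ (fun i : w => (i : H)) := by
      have := b.orthonormal
      rwa [hb] at this
    refine Pairwise.countable_of_isOpen_disjoint (s := fun i : w => Metric.ball (i : H) (1/2)) ?_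
      (fun i => Metric.isOpen_ball) (fun i => ⟨i, Metric.mem_ball_self (by norm_num)⟩)
    intro i j hij
    refine Metric.ball_disjoint_ball ?_
    have h0 := hon.2 hij
    have h1 : dist (i : H) j ^ 2 = 2 := by
      rw [dist_eq_norm, @norm_sub_sq_real, h0, hon.1 i, hon.1 j]
      norm_num
    nlinarith [dist_nonneg (x := (i : H)) (y := j)]
  obtain ⟨e, he⟩ := exists_injective_nat w
  have hon' : Orthonormal ℝ (fun i : w => (lp.single 2 (e i) (1 : ℝ) : lp (fun _ : ℕ => ℝ) 2)) := by
    classical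
    rw [orthonormal_iff_ite]
    intro i j
    rw [lp.inner_single_left]
    by_cases h : i = j
    · subst h; simp [lp.single_apply]
    · have : e i ≠ e j := fun h' => h (he h')
      simp [lp.single_apply, h, Pi.single_eq_of_ne this]
  exact ⟨fun x => hon'.orthogonalFamily.linearIsometry (b.repr x),
    hon'.orthogonalFamily.linearIsometry.isometry.comp b.repr.isometry⟩

theorem exists_l2_of_countable {X H : Type*} [Countable X] [NormedAddCommGroup H]
    [InnerProductSpace ℝ H] [CompleteSpace H] (f : X → H) :
    ∃ g : X → lp (fun _ : ℕ => ℝ) 2, ∀ x y, dist (g x) (g y) = dist (f x) (f y) := by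
  let V : Submodule ℝ H := (Submodule.span ℝ (Set.range f)).topologicalClosure
  have hsep : TopologicalSpace.IsSeparable (V : Set H) := by
    have := (Set.countable_range f).isSeparable.span (R := ℝ)
    simpa [V] using this.closure
  have : TopologicalSpace.SeparableSpace V := hsep.separableSpace
  have : CompleteSpace V := (Submodule.isClosed_topologicalClosure _).completeSpace_coe
  obtain ⟨g, hg⟩ := exists_l2_isometry (H := V)
  have hm : ∀ x, f x ∈ V := fun x => subset_closure (Submodule.subset_span ⟨x, rfl⟩)
  exact ⟨fun x => g ⟨f x, hm x⟩, fun x y => by rw [hg.dist_eq]; rfl⟩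

theorem exists_of_psd {X : Type*} [Countable X] (k : X → X → ℝ) (hs : ∀ x y, k x y = k y x)
    (hp : ∀ f : X →₀ ℝ, 0 ≤ f.sum fun x w => f.sum fun y w' => w * w' * k x y)
    (hd : ∀ x, k x x = 1) :
    ∃ g : X → lp (fun _ : ℕ => ℝ) 2, ∀ x y, dist (g x) (g y) ^ 2 = 2 - 2 * k x y := by
  let K : Matrix X X (ℝ →L[ℝ] ℝ) := fun x y => k x y • (1 : ℝ →L[ℝ] ℝ)
  have hK : K.PosSemidef := by
    have ht := (RKHS.posSemidef_tfae (K := K)).out 0 2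
    rw [ht]
    refine ⟨?_, ?_⟩
    · ext x y
      rw [Matrix.conjTranspose_apply]
      simp [K, hs x y]
    · intro f
      convert hp f using 1
      simp only [K, Finsupp.sum]
      simp only [RCLike.re_to_real]
      refine Finset.sum_congr rfl fun x _ => Finset.sum_congr rfl fun y _ => ?_
      simp [hs x y]
      ring
  have : Fact K.PosSemidef := ⟨hK⟩
  let f : X → RKHS.OfKernel K := fun x => RKHS.kerFun (RKHS.OfKernel K) x 1
  have hin : ∀ x y, inner ℝ (f x) (f y) = k x y := by
    intro x y
    have := RKHS.kernel_inner (RKHS.OfKernel K) y x (1:ℝ) (1:ℝ)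
    rw [RKHS.OfKernel.kernel_ofKernel] at this
    rw [← this]
    simp [K, hs x y]
  obtain ⟨g, hg⟩ := exists_l2_of_countable f
  refine ⟨g, fun x y => ?_⟩
  rw [hg, dist_eq_norm, @norm_sub_sq_real, hin, ← real_inner_self_eq_norm_sq,
    ← real_inner_self_eq_norm_sq, hin, hin, hd, hd]
  ring

end HilbertPart

/-- Normalised positive definite kernels of propagation at most `S`. -/
def GoodKer (X : Type*) [MetricSpace X] (S : ℝ) : Set (X → X → ℝ) :=
  {k | (∀ x y, k x y = k y x) ∧
    (∀ f : X →₀ ℝ, 0 ≤ f.sum fun x w => f.sum fun y w' => w * w' * k x y) ∧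
    (∀ x, k x x = 1) ∧ (∀ x y, 0 ≤ k x y) ∧ (∀ x y, k x y ≤ 1) ∧
    ∀ x y, S < dist x y → k x y = 0}

theorem embed_of_kernels {X : Type*} [MetricSpace X] [Countable X]
    (h : ∀ R : ℝ, 0 < R → ∀ δ : ℝ, 0 < δ → ∃ S : ℝ, ∃ k ∈ GoodKer X S,
      ∀ x y, dist x y ≤ R → 1 - δ ≤ k x y) :
    ∃ f : X → lp (fun _ : ℕ => ℝ) 2, CoarseEmbedding f := by
  classical
  rcases isEmpty_or_nonempty X with hX | ⟨⟨x₀⟩⟩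
  · exact ⟨fun x => (hX.false x).elim, id, id, monotone_id, monotone_id, Filter.tendsto_id,
      fun x => (hX.false x).elim⟩
  have h' : ∀ n : ℕ, ∃ S : ℝ, ∃ g : X → lp (fun _ : ℕ => ℝ) 2,
      (∀ x y, dist (g x) (g y) ^ 2 ≤ 2) ∧
      (∀ x y, dist x y ≤ n + 1 → dist (g x) (g y) ^ 2 ≤ (1 / 2) ^ n) ∧
      (∀ x y, S < dist x y → dist (g x) (g y) ^ 2 = 2) := by
    intro n
    obtain ⟨S, k, ⟨hs, hp, hd, h0, h1, hS⟩, hk⟩ := h (n + 1) (by positivity) ((1 / 2) ^ n / 2)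
      (by positivity)
    obtain ⟨g, hg⟩ := exists_of_psd k hs hp hd
    refine ⟨S, g, fun x y => ?_, fun x y hxy => ?_, fun x y hxy => ?_⟩
    · rw [hg]; linarith [h0 x y]
    · rw [hg]; linarith [hk x y hxy]
    · rw [hg, hS x y hxy]; ring
  choose S g hg2 hgs hgS using h'
  let t : X → X → ℕ → ℝ := fun x y n => dist (g n x) (g n y) ^ 2
  have hgeo : Summable (fun n : ℕ => ((1 : ℝ) / 2) ^ n) := summable_geometric_two
  let bd : ℝ → ℕ → ℝ := fun d n => (if n < ⌈d⌉₊ then (2 : ℝ) else 0) + (1 / 2) ^ n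
  have hsum1 : ∀ m : ℕ, HasSum (fun n : ℕ => if n < m then (2 : ℝ) else 0) (2 * m) := by
    intro m
    have : HasSum (fun n : ℕ => if n < m then (2 : ℝ) else 0)
        (∑ n ∈ Finset.range m, if n < m then (2 : ℝ) else 0) :=
      hasSum_sum_of_ne_finset_zero (by intro b hb; simpa using hb)
    convert this using 1
    rw [Finset.sum_congr rfl (g := fun _ => (2 : ℝ))]
    · simp [mul_comm]
    · intro x hx; simpa using hx
  have hbd : ∀ d, HasSum (bd d) (2 * ⌈d⌉₊ + 2) := fun d =>
    (hsum1 _).add hasSum_geometric_two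
  have htb : ∀ x y n, t x y n ≤ bd (dist x y) n := by
    intro x y n
    have hpos : (0 : ℝ) < (1 / 2) ^ n := by positivity
    by_cases hn : n < ⌈dist x y⌉₊
    · simp only [bd, hn, if_true]; linarith [hg2 n x y]
    · simp only [bd, hn, if_false, zero_add]
      refine hgs n x y ?_
      have := Nat.ceil_le.mp (not_lt.mp hn)
      linarith
  have ht0 : ∀ x y n, 0 ≤ t x y n := fun x y n => sq_nonneg _
  have hts : ∀ x y, Summable (t x y) := fun x y =>
    Summable.of_nonneg_of_le (ht0 x y) (htb x y) (hbd _).summable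
  have hmem : ∀ x, Memℓp (E := fun _ : ℕ => lp (fun _ : ℕ => ℝ) 2)
      (fun n => g n x - g n x₀) 2 := by
    intro x
    refine memℓp_gen ?_
    convert hts x x₀ using 2 with n
    simp [t, dist_eq_norm]
  let F : X → lp (fun _ : ℕ => lp (fun _ : ℕ => ℝ) 2) 2 := fun x => ⟨_, hmem x⟩
  have hF : ∀ x y, dist (F x) (F y) ^ 2 = ∑' n, t x y n := by
    intro x y
    have h2 : (0 : ℝ) < (2 : ENNReal).toReal := by simp
    have := lp.norm_rpow_eq_tsum h2 (F x - F y)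
    rw [dist_eq_norm]
    simp only [ENNReal.toReal_ofNat, Real.rpow_ofNat] at this
    rw [this]
    refine tsum_congr fun n => ?_
    change ‖(g n x - g n x₀) - (g n y - g n x₀)‖ ^ 2 = dist (g n x) (g n y) ^ 2
    rw [sub_sub_sub_cancel_right, dist_eq_norm]
  obtain ⟨f, hf⟩ := exists_l2_of_countable F
  let cnt : ℝ → ℕ := fun d => ((Finset.range ⌊d⌋₊).filter (fun n => S n < d)).card
  have hcm : Monotone cnt := by
    intro a b hab
    refine Finset.card_le_card fun n hn => ?_
    simp only [Finset.mem_filter, Finset.mem_range] at hn ⊢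
    exact ⟨hn.1.trans_le (Nat.floor_le_floor hab), hn.2.trans_le hab⟩
  have hct : Filter.Tendsto cnt Filter.atTop Filter.atTop := by
    refine Filter.tendsto_atTop_atTop_of_monotone hcm fun N => ?_
    obtain ⟨M, hM⟩ := (Finset.image S (Finset.range N)).bddAbove
    refine ⟨max N (M + 1), ?_⟩
    calc N = (Finset.range N).card := by simp
      _ ≤ _ := Finset.card_le_card fun n hn => ?_
    simp only [Finset.mem_filter]
    refine ⟨?_, ?_⟩
    · have : N ≤ ⌊max (N : ℝ) (M + 1)⌋₊ := Nat.le_floor (le_max_left _ _)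
      simp only [Finset.mem_range] at hn ⊢
      omega
    · have : S n ≤ M := hM (by exact_mod_cast Finset.mem_image_of_mem S hn)
      exact lt_of_lt_of_le (by linarith) (le_max_right _ _)
  refine ⟨f, fun d => Real.sqrt (cnt d), fun d => Real.sqrt (2 * ⌈d⌉₊ + 2), ?_, ?_, ?_, ?_⟩
  · intro a b hab
    exact Real.sqrt_le_sqrt (by exact_mod_cast hcm hab)
  · intro a b hab
    have : (⌈a⌉₊ : ℝ) ≤ ⌈b⌉₊ := by exact_mod_cast Nat.ceil_le_ceil hab
    exact Real.sqrt_le_sqrt (by linarith)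
  · exact Real.tendsto_sqrt_atTop.comp (tendsto_natCast_atTop_atTop.comp hct)
  · intro x y
    rw [hf]
    constructor
    · refine Real.sqrt_le_iff.mpr ⟨dist_nonneg, ?_⟩
      rw [hF]
      calc (cnt (dist x y) : ℝ)
          = ∑ n ∈ (Finset.range ⌊dist x y⌋₊).filter (fun n => S n < dist x y), 1 := by simp [cnt]
        _ ≤ ∑ n ∈ (Finset.range ⌊dist x y⌋₊).filter (fun n => S n < dist x y), t x y n := by
            refine Finset.sum_le_sum fun n hn => ?_
            simp only [Finset.mem_filter] at hn
            have := hgS n x y hn.2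
            simp only [t, this]; norm_num
        _ ≤ _ := (hts x y).sum_le_tsum _ fun n _ => ht0 x y n
    · refine Real.le_sqrt_of_sq_le ?_
      rw [hF]
      exact hasSum_le (htb x y) (hts x y).hasSum (hbd _)

theorem measOf_finset {X : Type*} (F : Finset X) (w : X → ℝ) (E : Set X) [DecidableEq X]
    [DecidablePred (· ∈ E)] :
    measOf (fun x => if x ∈ F then w x else 0) E = ∑ x ∈ F.filter (· ∈ E), w x := by
  unfold measOf
  rw [tsum_subtype E (fun x => if x ∈ F then w x else 0)]
  rw [tsum_eq_sum (s := F.filter (· ∈ E))]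
  · refine Finset.sum_congr rfl fun x hx => ?_
    simp only [Finset.mem_filter] at hx
    simp [Set.indicator, hx.1, hx.2]
  · intro x hx
    simp only [Finset.mem_filter, not_and] at hx
    by_cases h : x ∈ F <;> simp [Set.indicator, h, hx]

theorem decomp {X : Type*} [MetricSpace X] {ε R S : ℝ} (hε : 0 < ε) (hR : 0 < R) (hS : 0 < S)
    (hA : ∀ μ : X → ℝ, IsProbFn μ → ∃ E : Set X, E ⊆ Function.support μ ∧
      EMetric.diam E ≤ ENNReal.ofReal S ∧ measOf μ (bdry R E) < ε * measOf μ E) (w : X → ℝ) :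
    ∀ (n : ℕ) (F : Finset X), F.card = n → (∀ x ∈ F, 0 < w x) →
      ∃ (Z : Finset X) (c : X → X), Z ⊆ F ∧ ∑ x ∈ Z, w x ≤ ε * ∑ x ∈ F, w x ∧
        (∀ x ∈ F, c x ∈ F) ∧ (∀ x, x ∉ F → c x = x) ∧
        (∀ x y, c x = c y → dist x y ≤ S) ∧
        (∀ x ∈ F, x ∉ Z → ∀ y ∈ F, y ∉ Z → dist x y ≤ R → c x = c y) := by
  classical
  intro n
  induction n using Nat.strong_induction_on with
  | _ n ih =>
  intro F hFn hw
  rcases F.eq_empty_or_nonempty with rfl | hne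
  · exact ⟨∅, id, by simp, by simp, by simp, by simp,
      fun x y h => by rw [show x = y from h, dist_self]; exact hS.le, by simp⟩
  set W := ∑ x ∈ F, w x with hW
  have hWpos : 0 < W := Finset.sum_pos hw hne
  let μ : X → ℝ := fun x => if x ∈ F then w x / W else 0
  have hμ : IsProbFn μ := by
    refine ⟨fun x => ?_, ?_, ?_⟩
    · by_cases hx : x ∈ F
      · simp only [μ, hx, if_true]; exact (div_pos (hw x hx) hWpos).le
      · simp [μ, hx]
    · refine summable_of_ne_finset_zero (s := F) fun x hx => by simp [μ, hx]
    · rw [tsum_eq_sum (s := F) fun x hx => by simp [μ, hx]]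
      rw [Finset.sum_congr rfl (g := fun x => w x / W) (fun x hx => by simp [μ, hx]),
        ← Finset.sum_div, ← hW, div_self hWpos.ne']
  obtain ⟨E, hEs, hEd, hE⟩ := hA μ hμ
  have hEF : ∀ x ∈ E, x ∈ F := by
    intro x hx
    by_contra h
    exact hEs hx (by simp [μ, h])
  have hlt : ∑ x ∈ F.filter (· ∈ bdry R E), w x < ε * ∑ x ∈ F.filter (· ∈ E), w x := by
    rw [measOf_finset, measOf_finset, ← Finset.sum_div, ← Finset.sum_div, ← mul_div_assoc,
      div_lt_div_iff_of_pos_right hWpos] at hE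
    exact hE
  obtain ⟨e, he⟩ : E.Nonempty := by
    rw [Set.nonempty_iff_ne_empty]
    rintro rfl
    simp [bdry, nbhd] at hlt
  have hdist : ∀ x ∈ E, ∀ y ∈ E, dist x y ≤ S := by
    intro x hx y hy
    have := (Metric.edist_le_ediam_of_mem hx hy).trans hEd
    rwa [edist_dist, ENNReal.ofReal_le_ofReal_iff hS.le] at this
  let F' := F.filter (fun x => x ∉ nbhd R E)
  have hEn : ∀ x ∈ E, x ∈ nbhd R E := fun x hx => ⟨x, hx, by simp [hR.le]⟩
  have hcard : F'.card < n := by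
    rw [← hFn]
    refine Finset.card_lt_card (Finset.filter_ssubset.mpr ⟨e, hEF e he, ?_⟩)
    simpa using hEn e he
  obtain ⟨Z', c', hZ', hsum, hcF, hcn, hcS, hcR⟩ := ih _ hcard F' rfl
    (fun x hx => hw x (Finset.mem_filter.mp hx).1)
  have hF'E : ∀ x ∈ F', x ∉ E := fun x hx hxE => (Finset.mem_filter.mp hx).2 (hEn x hxE)
  have hc'E : ∀ y, y ∉ E → c' y ∉ E := by
    intro y hy
    by_cases hyF : y ∈ F'
    · exact hF'E _ (hcF y hyF)
    · rwa [hcn y hyF]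
  refine ⟨Z' ∪ F.filter (· ∈ bdry R E), fun x => if x ∈ E then e else c' x, ?_, ?_, ?_, ?_, ?_, ?_⟩
  · exact Finset.union_subset (hZ'.trans (Finset.filter_subset _ _)) (Finset.filter_subset _ _)
  · have h1 : ∑ x ∈ Z' ∪ F.filter (· ∈ bdry R E), w x ≤
        ∑ x ∈ Z', w x + ∑ x ∈ F.filter (· ∈ bdry R E), w x := by
      rw [← Finset.sum_union_inter]
      refine le_add_of_nonneg_right (Finset.sum_nonneg fun x hx => ?_)
      exact (hw x (Finset.mem_filter.mp (Finset.mem_inter.mp hx).2).1).le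
    have h2 : ∑ x ∈ F', w x + ∑ x ∈ F.filter (· ∈ E), w x ≤ W := by
      rw [← Finset.sum_union]
      · refine Finset.sum_le_sum_of_subset_of_nonneg ?_ fun x hx _ => (hw x hx).le
        exact Finset.union_subset (Finset.filter_subset _ _) (Finset.filter_subset _ _)
      · rw [Finset.disjoint_left]
        intro x hx hx'
        exact hF'E x hx (Finset.mem_filter.mp hx').2
    have h3 := mul_le_mul_of_nonneg_left h2 hε.le
    rw [mul_add] at h3
    linarith
  · intro x hx
    by_cases hxE : x ∈ E
    · simpa [hxE] using hEF e he
    · simp only [hxE, if_false]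
      by_cases hxF : x ∈ F'
      · exact (Finset.mem_filter.mp (hcF x hxF)).1
      · rwa [hcn x hxF]
  · intro x hx
    have hxE : x ∉ E := fun h => hx (hEF x h)
    simp only [hxE, if_false]
    exact hcn x fun h => hx (Finset.mem_filter.mp h).1
  · intro x y hxy
    by_cases hx : x ∈ E <;> by_cases hy : y ∈ E <;> simp only [hx, hy, if_true, if_false] at hxy
    · exact hdist x hx y hy
    · exact absurd (hxy ▸ he) (hc'E y hy)
    · exact absurd (hxy.symm ▸ he) (hc'E x hx)
    · exact hcS x y hxy
  · intro x hxF hxZ y hyF hyZ hxy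
    simp only [Finset.mem_union, Finset.mem_filter, not_or, not_and] at hxZ hyZ
    have hx' := hxZ.2 hxF
    have hy' := hyZ.2 hyF
    by_cases hx : x ∈ E <;> by_cases hy : y ∈ E <;> simp only [hx, hy, if_true, if_false]
    · exact absurd ⟨⟨x, hx, by rwa [dist_comm]⟩, hy⟩ hy'
    · exact absurd ⟨⟨y, hy, hxy⟩, hx⟩ hx'
    · have hxn : x ∈ F' := Finset.mem_filter.mpr ⟨hxF, fun h => hx' ⟨h, hx⟩⟩
      have hyn : y ∈ F' := Finset.mem_filter.mpr ⟨hyF, fun h => hy' ⟨h, hy⟩⟩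
      exact hcR x hxn hxZ.1 y hyn hyZ.1 hxy

theorem partition_goodKer {X : Type*} [MetricSpace X] [DecidableEq X] {S : ℝ} (c : X → X)
    (hc : ∀ x y, c x = c y → dist x y ≤ S) :
    (fun x y => if c x = c y then (1 : ℝ) else 0) ∈ GoodKer X S := by
  refine ⟨fun x y => by simp [eq_comm], fun f => ?_, fun x => by simp, fun x y => ?_,
    fun x y => ?_, fun x y h => ?_⟩
  · have : (f.sum fun x w => f.sum fun y w' => w * w' * (if c x = c y then (1 : ℝ) else 0)) =
        ∑ l ∈ f.support.image c, (∑ x ∈ f.support, if c x = l then f x else 0) ^ 2 := by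
      simp only [Finsupp.sum, sq, Finset.sum_mul_sum]
      symm
      rw [Finset.sum_comm]
      refine Finset.sum_congr rfl fun x hx => ?_
      rw [Finset.sum_comm]
      refine Finset.sum_congr rfl fun y hy => ?_
      rw [Finset.sum_eq_single (c x)]
      · by_cases h : c x = c y <;> simp [h, eq_comm]
      · intro b _ hb; simp [hb.symm]
      · intro h; exact absurd (Finset.mem_image_of_mem c hx) h
    rw [this]
    exact Finset.sum_nonneg fun l _ => sq_nonneg _
  · dsimp only; split_ifs <;> norm_num
  · dsimp only; split_ifs <;> norm_num
  · simp only [ite_eq_right_iff, one_ne_zero, imp_false]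
    intro h'
    exact absurd (hc x y h') (not_le.mpr h)

theorem convex_goodKer {X : Type*} [MetricSpace X] (S : ℝ) : Convex ℝ (GoodKer X S) := by
  rintro k ⟨hs, hp, hd, h0, h1, hS⟩ k' ⟨hs', hp', hd', h0', h1', hS'⟩ a b ha hb hab
  refine ⟨fun x y => ?_, fun f => ?_, fun x => ?_, fun x y => ?_, fun x y => ?_, fun x y h => ?_⟩
  · simp [hs x y, hs' x y]
  · have := add_nonneg (mul_nonneg ha (hp f)) (mul_nonneg hb (hp' f))
    refine this.trans_eq ?_
    unfold Finsupp.sum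
    simp only [Finset.mul_sum, ← Finset.sum_add_distrib]
    refine Finset.sum_congr rfl fun x _ => Finset.sum_congr rfl fun y _ => ?_
    simp; ring
  · simp [hd, hd', hab]
  · have := add_nonneg (mul_nonneg ha (h0 x y)) (mul_nonneg hb (h0' x y))
    simpa using this
  · have := add_le_add (mul_le_mul_of_nonneg_left (h1 x y) ha)
      (mul_le_mul_of_nonneg_left (h1' x y) hb)
    simpa [hab] using this
  · simp [hS x y h, hS' x y h]

theorem isCompact_goodKer {X : Type*} [MetricSpace X] (S : ℝ) : IsCompact (GoodKer X S) := by
  have hc : IsCompact (Set.univ.pi fun _ : X => Set.univ.pi fun _ : X => Set.Icc (0 : ℝ) 1) :=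
    isCompact_univ_pi fun _ => isCompact_univ_pi fun _ => isCompact_Icc
  refine hc.of_isClosed_subset ?_ ?_
  · have he : ∀ x y : X, Continuous fun k : X → X → ℝ => k x y := fun x y => by fun_prop
    simp only [GoodKer, Set.ofPred_and, Set.ofPred_forall]
    refine IsClosed.inter ?_ (IsClosed.inter ?_ (IsClosed.inter ?_ (IsClosed.inter ?_
      (IsClosed.inter ?_ ?_))))
    · exact isClosed_iInter fun x => isClosed_iInter fun y => isClosed_eq (he _ _) (he _ _)
    · refine isClosed_iInter fun f => isClosed_le continuous_const ?_
      simp only [Finsupp.sum]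
      fun_prop
    · exact isClosed_iInter fun x => isClosed_eq (he _ _) continuous_const
    · exact isClosed_iInter fun x => isClosed_iInter fun y => isClosed_le continuous_const (he _ _)
    · exact isClosed_iInter fun x => isClosed_iInter fun y => isClosed_le (he _ _) continuous_const
    · exact isClosed_iInter fun x => isClosed_iInter fun y => isClosed_iInter fun _ =>
        isClosed_eq (he _ _) continuous_const
  · rintro k ⟨-, -, -, h0, h1, -⟩
    exact fun x _ y _ => ⟨h0 x y, h1 x y⟩

/-- Minimax step on a finite set. -/
theorem finite_kernel {X : Type*} [MetricSpace X] {ε R S : ℝ} (hε : 0 < ε) (hR : 0 < R)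
    (hS : 0 < S)
    (hA : ∀ μ : X → ℝ, IsProbFn μ → ∃ E : Set X, E ⊆ Function.support μ ∧
      EMetric.diam E ≤ ENNReal.ofReal S ∧ measOf μ (bdry R E) < ε * measOf μ E) (F : Finset X) :
    ∃ k ∈ GoodKer X S, ∀ x ∈ F, ∀ y ∈ F, dist x y ≤ R → 1 - 4 * ε ≤ k x y := by
  classical
  let C : Set (F → ℝ) := {v | ∃ k ∈ GoodKer X S, ∀ x y : F, dist (x : X) y ≤ R →
    1 - v x - v y ≤ k x y}
  have hC : Convex ℝ C := by
    rintro v ⟨k, hk, hv⟩ v' ⟨k', hk', hv'⟩ a b ha hb hab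
    refine ⟨a • k + b • k', convex_goodKer S hk hk' ha hb hab, fun x y hxy => ?_⟩
    have := add_le_add (mul_le_mul_of_nonneg_left (hv x y hxy) ha)
      (mul_le_mul_of_nonneg_left (hv' x y hxy) hb)
    simp only [Pi.add_apply, Pi.smul_apply, smul_eq_mul]
    have hb' : b = 1 - a := by linarith
    subst hb'
    linarith
  let O : Set (F → ℝ) := Set.univ.pi fun _ => Set.Iio (2 * ε)
  have hOo : IsOpen O := isOpen_set_pi Set.finite_univ fun _ _ => isOpen_Iio
  have hOc : Convex ℝ O := convex_pi fun _ _ => convex_Iio _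
  have key : ∀ w : F → ℝ, (∀ x, 0 ≤ w x) → ∃ v ∈ C, ∑ x, w x * v x ≤ ε * ∑ x, w x := by
    intro w hw
    let w' : X → ℝ := fun x => if h : x ∈ F then w ⟨x, h⟩ else 0
    have hw' : ∀ x : F, w' x = w x := fun x => by simp [w']
    let F₀ := F.filter (fun x => 0 < w' x)
    obtain ⟨Z, c, hZ, hsum, -, -, hcS, hcR⟩ := decomp hε hR hS hA w' _ F₀ rfl
      (fun x hx => (Finset.mem_filter.mp hx).2)
    refine ⟨fun x => if (x : X) ∈ Z ∨ (x : X) ∉ F₀ then 1 else 0,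
      ⟨_, partition_goodKer c hcS, fun x y hxy => ?_⟩, ?_⟩
    · by_cases hx : (x : X) ∈ Z ∨ (x : X) ∉ F₀
      · simp only [hx, if_true]; split_ifs <;> norm_num
      by_cases hy : (y : X) ∈ Z ∨ (y : X) ∉ F₀
      · simp only [hy, if_true]; split_ifs <;> norm_num
      push Not at hx hy
      have := hcR x hx.2 hx.1 y hy.2 hy.1 hxy
      simp [this, hx, hy]
    · have h1 : ∑ x : F, w x * (if (x : X) ∈ Z ∨ (x : X) ∉ F₀ then 1 else 0) = ∑ x ∈ Z, w' x := by
        have : ∀ x : F, w x * (if (x : X) ∈ Z ∨ (x : X) ∉ F₀ then 1 else 0) =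
            (fun x : X => if x ∈ Z then w' x else 0) x := by
          intro x
          by_cases hx : (x : X) ∈ Z
          · simp [hx, hw']
          · by_cases hx0 : (x : X) ∈ F₀
            · simp [hx, hx0]
            · have hle : ¬ 0 < w x := fun h =>
                hx0 (Finset.mem_filter.mpr ⟨x.2, by rwa [hw']⟩)
              have : w x = 0 := le_antisymm (not_lt.mp hle) (hw x)
              simp [hx, this]
        rw [Finset.sum_congr rfl fun x _ => this x,
          Finset.sum_coe_sort F (fun x : X => if x ∈ Z then w' x else 0), ← Finset.sum_filter]
        refine Finset.sum_congr ?_ fun _ _ => rfl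
        ext x
        simp only [Finset.mem_filter]
        exact ⟨fun h => h.2, fun h => ⟨(Finset.mem_filter.mp (hZ h)).1, h⟩⟩
      have h2 : ∑ x ∈ F₀, w' x ≤ ∑ x : F, w x := by
        rw [← Finset.sum_congr rfl fun x _ => hw' x, Finset.sum_coe_sort F w']
        refine Finset.sum_le_sum_of_subset_of_nonneg (Finset.filter_subset _ _) fun x hx _ => ?_
        simpa [w', hx] using hw ⟨x, hx⟩
      rw [h1]
      exact hsum.trans (mul_le_mul_of_nonneg_left h2 hε.le)
  have hnd : ¬ Disjoint O C := by
    intro hd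
    obtain ⟨φ, u, hφO, hφC⟩ := geometric_hahn_banach_open hOc hOo hC hd
    let w : F → ℝ := fun x => φ (Pi.single x 1)
    have hφ : ∀ v : F → ℝ, φ v = ∑ x, w x * v x := by
      intro v
      conv_lhs => rw [← Finset.univ_sum_single v]
      rw [map_sum]
      refine Finset.sum_congr rfl fun x _ => ?_
      have : (Pi.single x (v x) : F → ℝ) = v x • Pi.single x (1 : ℝ) := by
        rw [← Pi.single_smul]; simp
      rw [this, map_smul, smul_eq_mul, mul_comm]
    have hu : 0 < u := by
      have := hφO 0 (fun x _ => by simp [hε])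
      simpa using this
    have hw : ∀ x, 0 ≤ w x := by
      intro x
      by_contra hneg
      push Not at hneg
      have hmem : (Pi.single x (u / w x) : F → ℝ) ∈ O := by
        intro y _
        have hneg' : u / w x < 0 := div_neg_of_pos_of_neg hu hneg
        simp only [Set.mem_Iio]
        by_cases hxy : y = x
        · subst hxy; simp; linarith
        · simp [Pi.single_eq_of_ne hxy, hε]
      have := hφO _ hmem
      rw [hφ, Finset.sum_eq_single x] at this
      · rw [Pi.single_eq_same, mul_div_cancel₀ _ hneg.ne] at this
        exact lt_irrefl _ this
      · intro y _ hy; simp [Pi.single_eq_of_ne hy]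
      · simp
    obtain ⟨v, hvC, hv⟩ := key w hw
    have h1 := hφC v hvC
    rw [hφ] at h1
    have h2 := hφO (fun _ => ε) (fun x _ => by simp only [Set.mem_Iio]; linarith)
    rw [hφ, ← Finset.sum_mul, mul_comm] at h2
    linarith
  obtain ⟨v, hvO, k, hk, hv⟩ := Set.not_disjoint_iff.mp hnd
  refine ⟨k, hk, fun x hx y hy hxy => ?_⟩
  have h1 := hv ⟨x, hx⟩ ⟨y, hy⟩ hxy
  have h2 : v ⟨x, hx⟩ < 2 * ε := hvO _ trivial
  have h3 : v ⟨y, hy⟩ < 2 * ε := hvO _ trivial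
  simp only at h1
  linarith

theorem global_kernel {X : Type*} [MetricSpace X] {ε R S : ℝ} (hε : 0 < ε) (hR : 0 < R)
    (hS : 0 < S)
    (hA : ∀ μ : X → ℝ, IsProbFn μ → ∃ E : Set X, E ⊆ Function.support μ ∧
      EMetric.diam E ≤ ENNReal.ofReal S ∧ measOf μ (bdry R E) < ε * measOf μ E) :
    ∃ k ∈ GoodKer X S, ∀ x y, dist x y ≤ R → 1 - 4 * ε ≤ k x y := by
  classical
  let T : {p : X × X // dist p.1 p.2 ≤ R} → Set (X → X → ℝ) := fun p =>
    {k | 1 - 4 * ε ≤ k p.1.1 p.1.2}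
  have hT : ∀ p, IsClosed (T p) := fun p => isClosed_le continuous_const (by fun_prop)
  obtain ⟨k, hk, hkT⟩ := (isCompact_goodKer (X := X) S).inter_iInter_nonempty T hT (by
    intro s
    let F : Finset X := s.image (fun p => p.1.1) ∪ s.image (fun p => p.1.2)
    obtain ⟨k, hk, h⟩ := finite_kernel hε hR hS hA F
    refine ⟨k, hk, Set.mem_iInter₂.mpr fun p hp => ?_⟩
    exact h _ (Finset.mem_union_left _ (Finset.mem_image_of_mem _ hp)) _
      (Finset.mem_union_right _ (Finset.mem_image_of_mem (fun p => p.1.2) hp)) p.2)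
  exact ⟨k, hk, fun x y hxy => Set.mem_iInter.mp hkT ⟨(x, y), hxy⟩⟩

theorem countable_of_boundedGeometry {X : Type*} [MetricSpace X] (h : BoundedGeometry X) :
    Countable X := by
  rcases isEmpty_or_nonempty X with hX | ⟨⟨x₀⟩⟩
  · infer_instance
  rw [← Set.countable_univ_iff]
  refine Set.Countable.mono (s₂ := ⋃ n : ℕ, {y | dist x₀ y ≤ (n : ℝ) + 1}) ?_ ?_
  · intro y _
    obtain ⟨n, hn⟩ := exists_nat_ge (dist x₀ y)
    exact Set.mem_iUnion.mpr ⟨n, by simp only [Set.mem_ofPred_eq]; linarith⟩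
  · refine Set.countable_iUnion fun n => ?_
    obtain ⟨N, hN⟩ := h (n + 1) (by positivity)
    exact (hN x₀).1.countable

/-- Theorem 3.4 (after Ostrovskii): if a bounded geometry metric space does not coarsely
embed into the real Hilbert space $\ell^2(\mathbb N)$, then there are $\epsilon, R > 0$ such
that for every $S > 0$ there is a probability measure $\mu$ on $X$ such that every
$E \subseteq \mathrm{supp}(\mu)$ of diameter at most $S$ satisfies
$\mu(\partial_R E) \geq \epsilon \mu(E)$. -/
theorem not_coarse_embeddable_implies_not_ulamu {X : Type*} [MetricSpace X]
    (hbg : BoundedGeometry X)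
    (hce : ¬ ∃ f : X → lp (fun _ : ℕ => ℝ) 2, CoarseEmbedding f) :
    ∃ ε : ℝ, 0 < ε ∧ ∃ R : ℝ, 0 < R ∧ ∀ S : ℝ, 0 < S →
      ∃ μ : X → ℝ, IsProbFn μ ∧
        ∀ E : Set X, E ⊆ Function.support μ → EMetric.diam E ≤ ENNReal.ofReal S →
          ε * measOf μ E ≤ measOf μ (bdry R E) := by

  by_contra hcon
  push Not at hcon
  have := countable_of_boundedGeometry hbg
  refine hce (embed_of_kernels fun R hR δ hδ => ?_)
  obtain ⟨S, hS, hA⟩ := hcon (δ / 4) (by positivity) R hR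
  obtain ⟨k, hk, h⟩ := global_kernel (by positivity) hR hS hA
  refine ⟨S, k, hk, fun x y hxy => ?_⟩
  have := h x y hxy
  linarith
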